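/- There exists a universal constant C > 0 such that the following holds. Let U be a finite set with |U| = n ≥ 2 and w : U → (0,∞) a positive weight function with total weight W = Σ_{a∈U} w(a). For i ∈ ℤ let B_i = { a ∈ U : 2^i ≤ w(a) < 2^{i+1} } and let n_i = |B_i|. Let a₁, a₂ be i.i.d. proportional samples, set b_j = ⌊log₂ w(a_j)⌋ for j = 1, 2, and b = max(b₁, b₂). Let P_b = P_prop(B_b) = (Σ_{x∈B_b} w(x))/W. Then E[√(n_b)/P_b] ≤ C·√n. -/

import Mathlib

open MeasureTheory ProbabilityTheory

/-!
Let `p x = w x / W` and let `β x` be the bucket index of `x`. The fibres of `(a₁, a₂)` have masses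
adding up to `1`, which forces them to be null-measurable, so the expectation is a finite sum over
pairs. The larger index equals `i` with probability at most `2 · P_i · ∑_{β y ≤ i} p y`; the factor
`P_i` cancels, and the expectation is at most `2 ∑_y p y ∑_{i ≥ β y} √n_i`. Elements of bucket `i`
weigh at least `r ^ i`, with `r = 2` for dyadic buckets, hence `n_i ≤ W / r ^ i`: the inner sum is
geometric and of order `√(W / w y) = 1 / √(p y)`. What remains is `∑_y √(p y)`, which
Cauchy–Schwarz bounds by `√n`.
-/

section FiniteRange

variable {Ω V : Type*} [MeasurableSpace Ω] {μ : Measure Ω} [IsFiniteMeasure μ]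

lemma nullMeasurableSet_of_measure_add_measure_compl_le {s : Set Ω}
    (h : μ s + μ sᶜ ≤ μ Set.univ) : NullMeasurableSet s μ := by
  set t := toMeasurable μ s
  set u := toMeasurable μ sᶜ
  have hst : s ⊆ t := subset_toMeasurable μ s
  have hsu : sᶜ ⊆ u := subset_toMeasurable μ sᶜ
  have hcover : t ∪ u = Set.univ :=
    Set.univ_subset_iff.1 ((Set.union_compl_self s).ge.trans (Set.union_subset_union hst hsu))
  have hinter : μ (t ∩ u) = 0 := by
    have hsum := measure_union_add_inter (μ := μ) t (measurableSet_toMeasurable μ sᶜ)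
    rw [hcover, measure_toMeasurable, measure_toMeasurable] at hsum
    refine nonpos_iff_eq_zero.1 (ENNReal.le_of_add_le_add_left (measure_ne_top μ Set.univ) ?_)
    rwa [hsum, add_zero]
  have hdiff : μ (t \ s) = 0 := measure_mono_null (Set.inter_subset_inter_right t hsu) hinter
  rw [← Set.sdiff_sdiff_cancel_left hst]
  exact nullMeasurableSet_toMeasurable.diff (.of_null hdiff)

variable [Fintype V] {X : Ω → V}

lemma nullMeasurable_of_sum_measure_fiber_le [MeasurableSpace V]
    (h : ∑ v, μ (X ⁻¹' {v}) ≤ μ Set.univ) : NullMeasurable X μ := by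
  classical
  intro S _
  have measure_preimage_le (T : Finset V) : μ (X ⁻¹' T) ≤ ∑ v ∈ T, μ (X ⁻¹' {v}) := by
    rw [← Finset.set_biUnion_preimage_singleton]
    exact measure_biUnion_finset_le T _
  apply nullMeasurableSet_of_measure_add_measure_compl_le
  calc μ (X ⁻¹' S) + μ (X ⁻¹' S)ᶜ
      = μ (X ⁻¹' S.toFinset) + μ (X ⁻¹' (S.toFinsetᶜ : Finset V)) := by
        rw [Finset.coe_compl, Set.coe_toFinset, Set.preimage_compl]
    _ ≤ ∑ v ∈ S.toFinset, μ (X ⁻¹' {v}) + ∑ v ∈ S.toFinsetᶜ, μ (X ⁻¹' {v}) :=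
        add_le_add (measure_preimage_le _) (measure_preimage_le _)
    _ = ∑ v, μ (X ⁻¹' {v}) := Finset.sum_add_sum_compl _ _
    _ ≤ μ Set.univ := h

lemma integral_comp_eq_sum_fiber {E : Type*} [NormedAddCommGroup E] [NormedSpace ℝ E]
    [CompleteSpace E] [MeasurableSpace V] [MeasurableSingletonClass V] (hX : AEMeasurable X μ)
    (g : V → E) : ∫ ω, g (X ω) ∂μ = ∑ v, μ.real (X ⁻¹' {v}) • g v := by
  rw [← integral_map hX .of_discrete, integral_fintype .of_finite]
  simp only [map_measureReal_apply_of_aemeasurable hX (measurableSet_singleton _)]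

end FiniteRange

section IndependentPair

variable {Ω V V' : Type*} [MeasurableSpace Ω] {μ : Measure Ω} [IsProbabilityMeasure μ] [Fintype V]
  [Fintype V'] {X : Ω → V} {Y : Ω → V'}

lemma nullMeasurable_prodMk_of_measure_fiber_eq_mul [MeasurableSpace V] [MeasurableSpace V']
    {p : V → ENNReal} {q : V' → ENNReal} (hp : ∑ x, p x ≤ 1) (hq : ∑ y, q y ≤ 1)
    (hlaw : ∀ x y, μ {ω | X ω = x ∧ Y ω = y} = p x * q y) :
    NullMeasurable (fun ω => (X ω, Y ω)) μ := by
  apply nullMeasurable_of_sum_measure_fiber_le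
  calc ∑ v, μ ((fun ω => (X ω, Y ω)) ⁻¹' {v}) = ∑ x, ∑ y, p x * q y := by
        simp only [Fintype.sum_prod_type, Set.preimage, Set.mem_singleton_iff, Prod.mk.injEq, hlaw]
    _ = (∑ x, p x) * ∑ y, q y := (Fintype.sum_mul_sum p q).symm
    _ ≤ 1 := mul_le_one' hp hq
    _ = μ Set.univ := measure_univ.symm

lemma integrable_and_integral_eq_sum_sum_of_measure_fiber_eq_mul {E : Type*}
    [NormedAddCommGroup E] [NormedSpace ℝ E] [CompleteSpace E] {p : V → ℝ} {q : V' → ℝ}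
    (hp : ∀ x, 0 ≤ p x) (hq : ∀ y, 0 ≤ q y) (hpsum : ∑ x, p x ≤ 1) (hqsum : ∑ y, q y ≤ 1)
    (hlaw : ∀ x y, μ {ω | X ω = x ∧ Y ω = y} = ENNReal.ofReal (p x) * ENNReal.ofReal (q y))
    (g : V × V' → E) :
    Integrable (fun ω => g (X ω, Y ω)) μ ∧
      ∫ ω, g (X ω, Y ω) ∂μ = ∑ x, ∑ y, (p x * q y) • g (x, y) := by
  let _ : MeasurableSpace V := ⊤
  let _ : MeasurableSpace V' := ⊤
  have hXY : AEMeasurable (fun ω => (X ω, Y ω)) μ := by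
    refine (nullMeasurable_prodMk_of_measure_fiber_eq_mul ?_ ?_ hlaw).aemeasurable
    · rwa [← ENNReal.ofReal_sum_of_nonneg fun x _ => hp x, ENNReal.ofReal_le_one]
    · rwa [← ENNReal.ofReal_sum_of_nonneg fun y _ => hq y, ENNReal.ofReal_le_one]
  refine ⟨(Integrable.of_finite (f := g)).comp_aemeasurable hXY, ?_⟩
  rw [integral_comp_eq_sum_fiber hXY g, Fintype.sum_prod_type]
  simp only [Set.preimage, Set.mem_singleton_iff, Prod.mk.injEq, measureReal_def, hlaw,
    ENNReal.toReal_mul, ENNReal.toReal_ofReal (hp _), ENNReal.toReal_ofReal (hq _)]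

end IndependentPair

lemma sum_zpow_le_of_forall_le {q : ℝ} (hq0 : 0 < q) (hq1 : q < 1) {s : Finset ℤ} {k : ℤ}
    (hs : ∀ i ∈ s, k ≤ i) : ∑ i ∈ s, q ^ i ≤ q ^ k / (1 - q) := by
  have hinj : Set.InjOn (fun i => (i - k).toNat) (s : Set ℤ) := fun i hi j hj hij => by
    have := hs i hi
    have := hs j hj
    grind
  calc ∑ i ∈ s, q ^ i = ∑ i ∈ s, q ^ k * q ^ (i - k).toNat := by
        refine Finset.sum_congr rfl fun i hi => ?_
        rw [← zpow_natCast, Int.toNat_of_nonneg (sub_nonneg.2 (hs i hi)), ← zpow_add₀ hq0.ne',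
          add_sub_cancel]
    _ = q ^ k * ∑ m ∈ s.image fun i => (i - k).toNat, q ^ m := by
        rw [← Finset.mul_sum, Finset.sum_image hinj]
    _ ≤ q ^ k * ∑' m : ℕ, q ^ m := by
        gcongr
        exact (summable_geometric_of_lt_one hq0.le hq1).sum_le_tsum _ fun m _ => by positivity
    _ = q ^ k / (1 - q) := by rw [tsum_geometric_of_lt_one hq0.le hq1, div_eq_mul_inv]

lemma sqrt_zpow {r : ℝ} (hr : 0 ≤ r) (i : ℤ) : √(r ^ i) = √r ^ i := by
  rw [Real.sqrt_eq_iff_mul_self_eq (by positivity) (by positivity), ← mul_zpow,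
    Real.mul_self_sqrt hr]

lemma inv_sqrt_zpow_le {r x : ℝ} {k : ℤ} (hr : 0 < r) (hx : 0 < x) (hk : x ≤ r ^ (k + 1)) :
    (√r)⁻¹ ^ k ≤ √r / √x := by
  rw [inv_zpow, inv_le_comm₀ (by positivity) (by positivity), inv_div,
    div_le_iff₀ (by positivity), ← zpow_add_one₀ (by positivity), ← sqrt_zpow hr.le]
  exact Real.sqrt_le_sqrt hk

lemma zpow_floor_logb_le {r x : ℝ} (hr : 1 < r) (hx : 0 < x) : r ^ ⌊Real.logb r x⌋ ≤ x := by
  rw [← Real.rpow_intCast, ← Real.le_logb_iff_rpow_le hr hx]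
  exact Int.floor_le _

lemma lt_zpow_floor_logb_add_one {r x : ℝ} (hr : 1 < r) (hx : 0 < x) :
    x < r ^ (⌊Real.logb r x⌋ + 1) := by
  rw [← Real.rpow_intCast, ← Real.logb_lt_iff_lt_rpow hr hx, Int.cast_add, Int.cast_one]
  exact Int.lt_floor_add_one _

section Buckets

variable {U ι : Type*} [Fintype U]

lemma sum_sqrt_le_sqrt_card {p : U → ℝ} (hp : ∀ x, 0 ≤ p x) (hsum : ∑ x, p x ≤ 1) :
    ∑ x, √(p x) ≤ √(Fintype.card U) := by
  refine Real.le_sqrt_of_sq_le (sq_sum_le_card_mul_sum_sq.trans ?_)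
  simp only [Real.sq_sqrt (hp _), Finset.card_univ]
  exact mul_le_of_le_one_right (by positivity) hsum

lemma div_sum_nonneg {w : U → ℝ} (hw : ∀ x, 0 ≤ w x) (x : U) : 0 ≤ w x / ∑ z, w z :=
  div_nonneg (hw x) (Finset.sum_nonneg fun z _ => hw z)

lemma sum_div_sum_le_one (w : U → ℝ) : ∑ x, w x / ∑ z, w z ≤ 1 := by
  rw [← Finset.sum_div]
  exact div_self_le_one _

lemma sum_sum_mul_max_le [LinearOrder ι] (β : U → ι) {p : U → ℝ} {F : ι → ℝ}
    (hp : ∀ x, 0 ≤ p x) (hF : ∀ i, 0 ≤ F i) :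
    ∑ x, ∑ y, p x * p y * F (max (β x) (β y)) ≤
      2 * ∑ y, p y * ∑ x with β y ≤ β x, p x * F (β x) := by
  set G : U → U → ℝ := fun x y => if β y ≤ β x then p y * (p x * F (β x)) else 0 with hG
  have hG0 (x y) : 0 ≤ G x y := by
    have := hp x
    have := hp y
    have := hF (β x)
    positivity
  have hle (x y) : p x * p y * F (max (β x) (β y)) ≤ G x y + G y x := by
    rcases le_total (β y) (β x) with h | h
    · calc p x * p y * F (max (β x) (β y)) = G x y := by
            simp only [hG, if_pos h, max_eq_left h]
            ring
        _ ≤ G x y + G y x := le_add_of_nonneg_right (hG0 y x)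
    · calc p x * p y * F (max (β x) (β y)) = G y x := by
            simp only [hG, if_pos h, max_eq_right h]
            ring
        _ ≤ G x y + G y x := le_add_of_nonneg_left (hG0 x y)
  calc ∑ x, ∑ y, p x * p y * F (max (β x) (β y)) ≤ ∑ x, ∑ y, (G x y + G y x) := by
        gcongr with x _ y _
        exact hle x y
    _ = 2 * ∑ y, ∑ x, G x y := by
        simp only [Finset.sum_add_distrib]
        rw [Finset.sum_comm, two_mul]
    _ = 2 * ∑ y, p y * ∑ x with β y ≤ β x, p x * F (β x) := by
        simp only [hG, Finset.mul_sum, Finset.sum_filter, mul_ite, mul_zero]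

/-- The bucket `B_i` of the index function `β`, i.e. its fibre over `i`. -/
def bucket [DecidableEq ι] (β : U → ι) (i : ι) : Finset U := {x | β x = i}

/-- The probability `P_prop(s)` that a sample drawn proportionally to the weights `w` lies in
`s`. -/
noncomputable def propProb (w : U → ℝ) (s : Finset U) : ℝ := (∑ x ∈ s, w x) / ∑ x, w x

/-- The ratio `√n_i / P_prop(B_i)` whose expectation at the larger of two sampled bucket indices is
to be bounded; it is `0 / 0 = 0` on an empty bucket. -/
noncomputable def sqrtCardDivProb [DecidableEq ι] (w : U → ℝ) (β : U → ι) (i : ι) : ℝ :=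
  √(bucket β i).card / propProb w (bucket β i)

variable {w : U → ℝ}

lemma sqrtCardDivProb_nonneg [DecidableEq ι] (hw : ∀ x, 0 ≤ w x) (β : U → ι) (i : ι) :
    0 ≤ sqrtCardDivProb w β i :=
  div_nonneg (Real.sqrt_nonneg _)
    (div_nonneg (Finset.sum_nonneg fun x _ => hw x) (Finset.sum_nonneg fun x _ => hw x))

lemma propProb_pos (hw : ∀ x, 0 < w x) {s : Finset U} (hs : s.Nonempty) : 0 < propProb w s :=
  div_pos (Finset.sum_pos (fun x _ => hw x) hs)
    (Finset.sum_pos (fun x _ => hw x) (hs.mono (Finset.subset_univ s)))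

lemma sum_bucket_mul_sqrtCardDivProb [DecidableEq ι] (hw : ∀ x, 0 < w x) (β : U → ι) (i : ι) :
    ∑ x ∈ bucket β i, w x / (∑ z, w z) * sqrtCardDivProb w β i = √(bucket β i).card := by
  rw [← Finset.sum_mul, ← Finset.sum_div]
  refine mul_div_cancel_of_imp' fun hzero => ?_
  rcases (bucket β i).eq_empty_or_nonempty with hempty | hne
  · rw [hempty, Finset.card_empty, Nat.cast_zero, Real.sqrt_zero]
  · exact absurd hzero (propProb_pos hw hne).ne'

lemma sum_filter_mul_sqrtCardDivProb [LinearOrder ι] (hw : ∀ x, 0 < w x) (β : U → ι) (k : ι) :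
    ∑ x with k ≤ β x, w x / (∑ z, w z) * sqrtCardDivProb w β (β x) =
      ∑ i ∈ Finset.univ.image β with k ≤ i, √(bucket β i).card := by
  rw [Finset.sum_filter, Finset.sum_filter,
    ← Finset.sum_fiberwise_of_maps_to fun x _ => Finset.mem_image_of_mem β (Finset.mem_univ x)]
  refine Finset.sum_congr rfl fun i _ => ?_
  calc ∑ x with β x = i,
        (if k ≤ β x then w x / (∑ z, w z) * sqrtCardDivProb w β (β x) else 0)
      = ∑ x ∈ bucket β i, if k ≤ i then w x / (∑ z, w z) * sqrtCardDivProb w β i else 0 :=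
        Finset.sum_congr rfl fun x hx => by rw [(Finset.mem_filter.1 hx).2]
    _ = if k ≤ i then √(bucket β i).card else 0 := by
        rw [← sum_bucket_mul_sqrtCardDivProb hw]
        split_ifs
        · rfl
        · exact Finset.sum_const_zero

variable {β : U → ℤ} {r : ℝ}

lemma sqrt_card_bucket_le (hr : 0 < r) (hβ : ∀ x, r ^ β x ≤ w x) (i : ℤ) :
    √(bucket β i).card ≤ √(∑ x, w x) * (√r)⁻¹ ^ i := by
  have hmass : (bucket β i).card * r ^ i ≤ ∑ x, w x :=
    calc (bucket β i).card * r ^ i = ∑ x ∈ bucket β i, r ^ β x := by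
          rw [← nsmul_eq_mul, ← Finset.sum_const]
          exact Finset.sum_congr rfl fun x hx => by rw [(Finset.mem_filter.1 hx).2]
      _ ≤ ∑ x, r ^ β x :=
          Finset.sum_le_univ_sum_of_nonneg fun x => by positivity
      _ ≤ ∑ x, w x := Finset.sum_le_sum fun x _ => hβ x
  rw [inv_zpow, ← div_eq_mul_inv, le_div_iff₀ (by positivity), ← sqrt_zpow hr.le,
    ← Real.sqrt_mul (Nat.cast_nonneg _)]
  exact Real.sqrt_le_sqrt hmass

lemma sum_filter_mul_sqrtCardDivProb_le (hr : 1 < r)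
    (hβ : ∀ x, w x ∈ Set.Icc (r ^ β x) (r ^ (β x + 1))) (y : U) :
    ∑ x with β y ≤ β x, w x / (∑ z, w z) * sqrtCardDivProb w β (β x) ≤
      √r / (1 - (√r)⁻¹) / √(w y / ∑ z, w z) := by
  have hr0 : 0 < r := one_pos.trans hr
  have hw (x) : 0 < w x := (zpow_pos hr0 _).trans_le (hβ x).1
  have hq1 : (√r)⁻¹ < 1 := inv_lt_one_of_one_lt₀ (Real.lt_sqrt_of_sq_lt (by simpa))
  set W := ∑ z, w z
  set S : Finset ℤ := {i ∈ Finset.univ.image β | β y ≤ i}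
  calc ∑ x with β y ≤ β x, w x / W * sqrtCardDivProb w β (β x)
      = ∑ i ∈ S, √(bucket β i).card := sum_filter_mul_sqrtCardDivProb hw β (β y)
    _ ≤ ∑ i ∈ S, √W * (√r)⁻¹ ^ i :=
        Finset.sum_le_sum fun i _ => sqrt_card_bucket_le hr0 (fun x => (hβ x).1) i
    _ = √W * ∑ i ∈ S, (√r)⁻¹ ^ i := (Finset.mul_sum _ _ _).symm
    _ ≤ √W * ((√r)⁻¹ ^ β y / (1 - (√r)⁻¹)) := by
        gcongr
        exact sum_zpow_le_of_forall_le (by positivity) hq1 fun i hi => (Finset.mem_filter.1 hi).2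
    _ ≤ √W * (√r / √(w y) / (1 - (√r)⁻¹)) := by
        have := sub_pos.2 hq1
        gcongr
        exact inv_sqrt_zpow_le hr0 (hw y) (hβ y).2
    _ = √r / (1 - (√r)⁻¹) / √(w y / W) := by
        rw [Real.sqrt_div (hw y).le]
        field_simp

lemma sum_sum_mul_sqrtCardDivProb_max_le (hr : 1 < r)
    (hβ : ∀ x, w x ∈ Set.Icc (r ^ β x) (r ^ (β x + 1))) :
    ∑ x, ∑ y, w x / (∑ z, w z) * (w y / ∑ z, w z) * sqrtCardDivProb w β (max (β x) (β y)) ≤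
      2 * (√r / (1 - (√r)⁻¹)) * √(Fintype.card U) := by
  set p : U → ℝ := fun x => w x / ∑ z, w z
  set K : ℝ := √r / (1 - (√r)⁻¹)
  have hw (x) : 0 ≤ w x := (zpow_pos (one_pos.trans hr) _).le.trans (hβ x).1
  have hp (x) : 0 ≤ p x := div_sum_nonneg hw x
  have hK : 0 ≤ K := div_nonneg (Real.sqrt_nonneg r)
    (sub_nonneg.2 (inv_le_one_of_one_le₀ (Real.one_le_sqrt.2 hr.le)))
  calc ∑ x, ∑ y, p x * p y * sqrtCardDivProb w β (max (β x) (β y))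
      ≤ 2 * ∑ y, p y * ∑ x with β y ≤ β x, p x * sqrtCardDivProb w β (β x) :=
        sum_sum_mul_max_le β hp (sqrtCardDivProb_nonneg hw β)
    _ ≤ 2 * ∑ y, p y * (K / √(p y)) := by
        gcongr with y _
        · exact hp y
        · exact sum_filter_mul_sqrtCardDivProb_le hr hβ y
    _ = 2 * K * ∑ y, √(p y) := by
        simp only [mul_div_left_comm _ K, Real.div_sqrt, ← Finset.mul_sum, mul_assoc]
    _ ≤ 2 * K * √(Fintype.card U) := by
        gcongr
        exact sum_sqrt_le_sqrt_card hp (sum_div_sum_le_one w)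

theorem bucket_sqrt_card_over_probability_bound_general {Ω : Type*} [MeasurableSpace Ω]
    {μ : Measure Ω} [IsProbabilityMeasure μ] (hr : 1 < r)
    (hβ : ∀ x, w x ∈ Set.Icc (r ^ β x) (r ^ (β x + 1))) {a₁ a₂ : Ω → U}
    (hlaw : ∀ x y, μ {ω | a₁ ω = x ∧ a₂ ω = y} =
      ENNReal.ofReal (w x / ∑ z, w z) * ENNReal.ofReal (w y / ∑ z, w z)) :
    Integrable (fun ω => sqrtCardDivProb w β (max (β (a₁ ω)) (β (a₂ ω)))) μ ∧
      ∫ ω, sqrtCardDivProb w β (max (β (a₁ ω)) (β (a₂ ω))) ∂μ ≤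
        2 * (√r / (1 - (√r)⁻¹)) * √(Fintype.card U) := by
  have hw (x) : 0 ≤ w x := (zpow_pos (one_pos.trans hr) _).le.trans (hβ x).1
  obtain ⟨hintegrable, hintegral⟩ :=
    integrable_and_integral_eq_sum_sum_of_measure_fiber_eq_mul (div_sum_nonneg hw)
      (div_sum_nonneg hw) (sum_div_sum_le_one w) (sum_div_sum_le_one w) hlaw
      fun v => sqrtCardDivProb w β (max (β v.1) (β v.2))
  exact ⟨hintegrable, hintegral.trans_le (sum_sum_mul_sqrtCardDivProb_max_le hr hβ)⟩

end Buckets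

/-- There is a universal constant `C > 0` such that the following holds.
With buckets `B_i = {a : 2^i ≤ w a < 2^{i+1}}` (so `a ∈ B_{⌊log₂ w(a)⌋}`), two i.i.d.
proportional samples `a₁, a₂`, and `b` the larger of their bucket indices, one has
`E[√(n_b)/P_prop(B_b)] ≤ C·√n`, where `n_i = |B_i|`. -/
theorem bucket_sqrt_card_over_probability_bound :
    ∃ C : ℝ, 0 < C ∧
      ∀ (Ω U : Type) (_ : MeasurableSpace Ω) (μ : Measure Ω) (_ : IsProbabilityMeasure μ)
        (_ : Fintype U) (_ : DecidableEq U) (n : ℕ), 2 ≤ n → Fintype.card U = n →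
        ∀ (w : U → ℝ), (∀ x, 0 < w x) →
        ∀ (W : ℝ), W = ∑ x, w x →
        ∀ (a₁ a₂ : Ω → U),
          (∀ v₁ v₂ : U, μ {ω | a₁ ω = v₁ ∧ a₂ ω = v₂} =
            ENNReal.ofReal (w v₁ / W) * ENNReal.ofReal (w v₂ / W)) →
        ∀ (b : Ω → ℤ),
          (∀ ω, b ω = max ⌊Real.logb 2 (w (a₁ ω))⌋ ⌊Real.logb 2 (w (a₂ ω))⌋) →
        ∀ (P : ℤ → ℝ),
          (∀ i : ℤ, P i =
            (∑ x ∈ Finset.univ.filter (fun x => ⌊Real.logb 2 (w x)⌋ = i), w x) / W) →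
        ∀ (N : ℤ → ℕ),
          (∀ i : ℤ, N i = (Finset.univ.filter (fun x => ⌊Real.logb 2 (w x)⌋ = i)).card) →
        ∫ ω, Real.sqrt (N (b ω)) / P (b ω) ∂μ ≤ C * Real.sqrt n := by
  have hr : (√2)⁻¹ < 1 := inv_lt_one_of_one_lt₀ (Real.lt_sqrt_of_sq_lt (by norm_num))
  refine ⟨2 * (√2 / (1 - (√2)⁻¹)), by have := sub_pos.2 hr; positivity, ?_⟩
  intro Ω U _ μ _ _ _ n _ hcard w hw W hW a₁ a₂ hlaw b hb P hP N hN
  subst hcard hW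
  simp only [hb, hP, hN]
  exact (bucket_sqrt_card_over_probability_bound_general one_lt_two (fun x =>
    ⟨zpow_floor_logb_le one_lt_two (hw x), (lt_zpow_floor_logb_add_one one_lt_two (hw x)).le⟩)
    hlaw).2
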